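/- arXiv:1510.00950 — 7 statements merged into one kernel-verified Lean document; each statement's English description precedes it below -/
import Mathlib

section
/- Let {y_r : r = 0, 1, 2, …} be a set of real numbers such that there is δ > 0 with |y_r − y_{r'}| ≥ δ for all r ≠ r'. If P ≥ 2 and y ≥ x are real numbers, then ∑_{y_r ∈ [x,y]} min(P, ‖y_r‖^{−1}) ≤ 2(y − x + 1)(2P + δ^{−1} log(eP/2)). -/
/-- The distance from a real number to the nearest integer. -/
noncomputable def distNearestInt (x : ℝ) : ℝ := |x - round x|

theorem dist_eq_of_le (z : ℝ) (n : ℤ) (h : |z - n| ≤ 1 / 2) : distNearestInt z = |z - n| := by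
  unfold distNearestInt
  apply le_antisymm (round_le z n)
  by_cases hn : round z = n
  · rw [hn]
  · have h1 : (1 : ℤ) ≤ |round z - n| := Int.one_le_abs (sub_ne_zero.mpr hn)
    have h2 : (1 : ℝ) ≤ |(round z : ℝ) - n| := by exact_mod_cast h1
    have h3 : |(round z : ℝ) - n| ≤ |z - n| + |z - round z| := by
      have := abs_sub (z - n) (z - round z)
      have e : (round z : ℝ) - n = (z - n) - (z - round z) := by ring
      rw [e]; exact this
    linarith

/-- The truncated reciprocal. -/
noncomputable def gg (P t : ℝ) : ℝ := if t = 0 then P else min P t⁻¹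

/-- Primitive of the truncated reciprocal. -/
noncomputable def FF (P t : ℝ) : ℝ := if t ≤ P⁻¹ then P * t else 1 + Real.log (P * t)

theorem gg_le (P t : ℝ) : gg P t ≤ P := by
  unfold gg; split_ifs <;> simp

theorem gg_nonneg (P t : ℝ) (hP : 0 < P) (ht : 0 ≤ t) : 0 ≤ gg P t := by
  unfold gg; split_ifs
  · exact hP.le
  · exact le_min hP.le (inv_nonneg.mpr ht)

theorem FF_step (P s t : ℝ) (hP : 0 < P) (hs : 0 ≤ s) (hst : s ≤ t) :
    (t - s) * gg P t ≤ FF P t - FF P s := by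
  by_cases ht : t ≤ P⁻¹
  · have hs' : s ≤ P⁻¹ := hst.trans ht
    unfold FF
    rw [if_pos ht, if_pos hs']
    nlinarith [gg_le P t, mul_le_mul_of_nonneg_left (gg_le P t) (sub_nonneg.mpr hst)]
  · have ht' := not_le.mp ht
    have htp : 0 < t := (inv_pos.mpr hP).trans ht'
    have hg : gg P t ≤ t⁻¹ := by
      unfold gg; rw [if_neg htp.ne']; exact min_le_right _ _
    have h0 := mul_le_mul_of_nonneg_left hg (sub_nonneg.mpr hst)
    have hPt : 1 < P * t := by
      have := mul_lt_mul_of_pos_left ht' hP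
      rwa [mul_inv_cancel₀ hP.ne'] at this
    refine h0.trans ?_
    have e0 : (t - s) * t⁻¹ = 1 - s * t⁻¹ := by field_simp
    unfold FF
    rw [if_neg ht, e0]
    split_ifs with hs'
    · have hl := Real.one_sub_inv_le_log_of_pos (by linarith : 0 < P * t)
      have hPs : P * s ≤ 1 := by
        have := mul_le_mul_of_nonneg_left hs' hP.le
        rwa [mul_inv_cancel₀ hP.ne'] at this
      have hi : (P * t)⁻¹ ≤ 1 := inv_le_one_of_one_le₀ hPt.le
      have e : s * t⁻¹ = (P * s) * (P * t)⁻¹ := by field_simp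
      rw [e]
      nlinarith [mul_nonneg (sub_nonneg.mpr hi) (sub_nonneg.mpr hPs)]
    · have hsp : 0 < s := (inv_pos.mpr hP).trans (not_le.mp hs')
      have hl := Real.one_sub_inv_le_log_of_pos (by positivity : 0 < t / s)
      rw [Real.log_div htp.ne' hsp.ne', inv_div] at hl
      rw [Real.log_mul hP.ne' htp.ne', Real.log_mul hP.ne' hsp.ne', ← div_eq_mul_inv]
      linarith

theorem FF_mono (P s t : ℝ) (hP : 0 < P) (hs : 0 ≤ s) (hst : s ≤ t) : FF P s ≤ FF P t := by
  have h := FF_step P s t hP hs hst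
  have := mul_nonneg (sub_nonneg.mpr hst) (gg_nonneg P t hP (hs.trans hst))
  linarith

theorem finset_bound (P δ c : ℝ) (hP : 0 < P) (hδ : 0 < δ) (hc : 0 ≤ c) (T : Finset ℝ) :
    ∀ d : ℝ, c ≤ d → (∀ t ∈ T, c ≤ t ∧ t ≤ d) →
      (∀ s ∈ T, ∀ t ∈ T, s ≠ t → δ ≤ |s - t|) →
      ∑ t ∈ T, gg P t ≤ P + δ⁻¹ * (FF P d - FF P c) := by
  have hi := inv_pos.mpr hδ
  induction T using Finset.induction_on_max with
  | empty =>
    intro d hcd _ _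
    have := mul_nonneg hi.le (sub_nonneg.mpr (FF_mono P c d hP hc hcd))
    simp only [Finset.sum_empty]; linarith
  | insert m T hm ih =>
    intro d hcd hr hsep
    have hmT : m ∉ T := fun h => lt_irrefl _ (hm m h)
    obtain ⟨hcm, hmd⟩ := hr m (Finset.mem_insert_self _ _)
    have hmono := mul_le_mul_of_nonneg_left (FF_mono P m d hP (hc.trans hcm) hmd) hi.le
    rw [Finset.sum_insert hmT]
    rcases T.eq_empty_or_nonempty with rfl | ⟨w, hw⟩
    · have := mul_nonneg hi.le (sub_nonneg.mpr (FF_mono P c m hP hc hcm))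
      have := gg_le P m
      simp only [Finset.sum_empty]; linarith
    · have hle : ∀ t ∈ T, c ≤ t ∧ t ≤ m - δ := by
        intro t ht
        refine ⟨(hr t (Finset.mem_insert_of_mem ht)).1, ?_⟩
        have h1 := hsep m (Finset.mem_insert_self _ _) t (Finset.mem_insert_of_mem ht) (hm t ht).ne'
        rw [abs_of_pos (sub_pos.mpr (hm t ht))] at h1
        linarith
      have hcm' : c ≤ m - δ := (hle w hw).1.trans (hle w hw).2
      have h1 := ih (m - δ) hcm' hle (fun s hs t ht => hsep s (Finset.mem_insert_of_mem hs) t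
        (Finset.mem_insert_of_mem ht))
      have h2 := FF_step P (m - δ) m hP (hc.trans hcm') (by linarith)
      have h3 := mul_le_mul_of_nonneg_left h2 hi.le
      have e : δ⁻¹ * ((m - (m - δ)) * gg P m) = gg P m := by field_simp; ring
      rw [e] at h3
      linarith

theorem piece_bound {ι : Type*} (y : ι → ℝ) (P δ c d : ℝ) (hP : 0 < P) (hδ : 0 < δ)
    (hc : 0 ≤ c) (hcd : c ≤ d) (hd : d ≤ 1 / 2) (S : Finset ι) (n : ℤ) (ε : ℝ)
    (hε : ε = 1 ∨ ε = -1)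
    (hsep : ∀ r ∈ S, ∀ r' ∈ S, r ≠ r' → δ ≤ |y r - y r'|)
    (hr : ∀ r ∈ S, c ≤ ε * (y r - n) ∧ ε * (y r - n) ≤ d) :
    ∑ r ∈ S, gg P (distNearestInt (y r)) ≤ P + δ⁻¹ * (FF P d - FF P c) := by
  classical
  have hab : |ε| = 1 := by rcases hε with rfl | rfl <;> simp
  have hdist : ∀ r ∈ S, distNearestInt (y r) = ε * (y r - n) := by
    intro r h
    have h1 := hr r h
    have e : |y r - n| = ε * (y r - n) := by
      rw [← abs_of_nonneg (hc.trans h1.1), abs_mul, hab, one_mul]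
    rw [dist_eq_of_le _ n (by rw [e]; linarith), e]
  have hsep' : ∀ r ∈ S, ∀ r' ∈ S, r ≠ r' → δ ≤ |ε * (y r - n) - ε * (y r' - n)| := by
    intro r h r' h' hne
    have e : ε * (y r - n) - ε * (y r' - n) = ε * (y r - y r') := by ring
    rw [e, abs_mul, hab, one_mul]
    exact hsep r h r' h' hne
  rw [Finset.sum_congr rfl (fun r h => by rw [hdist r h])]
  have hinj : Set.InjOn (fun r => ε * (y r - n)) S := by
    intro r h r' h' heq
    by_contra hne
    have := hsep' r h r' h' hne
    simp only at heq
    rw [heq, sub_self, abs_zero] at this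
    linarith
  rw [← Finset.sum_image (f := gg P) hinj]
  apply finset_bound P δ c hP hδ hc _ d hcd
  · intro t ht
    obtain ⟨r, h, rfl⟩ := Finset.mem_image.mp ht
    exact hr r h
  · intro s hs t ht hne
    obtain ⟨r, h, rfl⟩ := Finset.mem_image.mp hs
    obtain ⟨r', h', rfl⟩ := Finset.mem_image.mp ht
    exact hsep' r h r' h' (fun h => hne (by rw [h]))

theorem window_bound {ι : Type*} (y : ι → ℝ) (P δ a : ℝ) (hP : 2 ≤ P) (hδ : 0 < δ)
    (S : Finset ι)
    (hsep : ∀ r ∈ S, ∀ r' ∈ S, r ≠ r' → δ ≤ |y r - y r'|)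
    (hr : ∀ r ∈ S, a ≤ y r ∧ y r < a + 1) :
    ∑ r ∈ S, gg P (distNearestInt (y r)) ≤
      4 * P + 2 * (δ⁻¹ * Real.log (Real.exp 1 * P / 2)) := by
  classical
  have hP0 : 0 < P := by linarith
  have hF0 : FF P 0 = 0 := by
    unfold FF; rw [if_pos (inv_pos.mpr hP0).le, mul_zero]
  have hF1 : FF P (1 / 2) = Real.log (Real.exp 1 * P / 2) := by
    have e : Real.log (Real.exp 1 * P / 2) = 1 + Real.log (P * (1 / 2)) := by
      rw [mul_div_assoc, Real.log_mul (Real.exp_pos 1).ne' (by positivity), Real.log_exp]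
      congr 2; ring
    rw [e]; unfold FF
    split_ifs with h
    · have : P = 2 := by
        have := mul_le_mul_of_nonneg_left h hP0.le
        rw [mul_inv_cancel₀ hP0.ne'] at this
        linarith
      subst this; norm_num
    · rfl
  have key : ∀ p q : ℝ, ∑ r ∈ S, gg P (distNearestInt (y r)) =
      ∑ r ∈ S with y r ≤ p, gg P (distNearestInt (y r)) +
      (∑ r ∈ {r ∈ S | ¬ y r ≤ p} with y r ≤ q, gg P (distNearestInt (y r)) +
       ∑ r ∈ {r ∈ S | ¬ y r ≤ p} with ¬ y r ≤ q, gg P (distNearestInt (y r))) := by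
    intro p q
    rw [Finset.sum_filter_add_sum_filter_not, Finset.sum_filter_add_sum_filter_not]
  have hm1 := Int.floor_le a
  have hm2 := Int.lt_floor_add_one a
  set m : ℤ := ⌊a⌋ with hm
  by_cases hθ : a - m ≤ 1 / 2
  · rw [key (m + 1 / 2) (m + 1)]
    have h1 := piece_bound y P δ (a - m) (1 / 2) hP0 hδ (by linarith) hθ le_rfl
      {r ∈ S | y r ≤ m + 1 / 2} m 1 (Or.inl rfl)
      (fun r h r' h' => hsep r (Finset.mem_filter.mp h).1 r' (Finset.mem_filter.mp h').1)
      (by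
        intro r h
        simp only [Finset.mem_filter] at h
        have := hr r h.1
        constructor <;> linarith)
    have h2 := piece_bound y P δ 0 (1 / 2) hP0 hδ le_rfl (by norm_num) le_rfl
      {r ∈ {r ∈ S | ¬ y r ≤ m + 1 / 2} | y r ≤ m + 1} (m + 1) (-1) (Or.inr rfl)
      (fun r h r' h' => hsep r (by simp only [Finset.mem_filter] at h; exact h.1.1) r'
        (by simp only [Finset.mem_filter] at h'; exact h'.1.1))
      (by
        intro r h
        simp only [Finset.mem_filter, not_le] at h
        push_cast
        constructor <;> linarith)
    have h3 := piece_bound y P δ 0 (a - m) hP0 hδ le_rfl (by linarith) hθ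
      {r ∈ {r ∈ S | ¬ y r ≤ m + 1 / 2} | ¬ y r ≤ m + 1} (m + 1) 1 (Or.inl rfl)
      (fun r h r' h' => hsep r (by simp only [Finset.mem_filter] at h; exact h.1.1) r'
        (by simp only [Finset.mem_filter] at h'; exact h'.1.1))
      (by
        intro r h
        simp only [Finset.mem_filter, not_le] at h
        have := hr r h.1.1
        push_cast
        constructor <;> linarith)
    rw [hF1] at h1 h2
    rw [hF0] at h2 h3
    linarith
  · have hθ' := not_le.mp hθ
    rw [key (m + 1) (m + 3 / 2)]
    have h1 := piece_bound y P δ 0 (m + 1 - a) hP0 hδ le_rfl (by linarith) (by linarith)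
      {r ∈ S | y r ≤ m + 1} (m + 1) (-1) (Or.inr rfl)
      (fun r h r' h' => hsep r (Finset.mem_filter.mp h).1 r' (Finset.mem_filter.mp h').1)
      (by
        intro r h
        simp only [Finset.mem_filter] at h
        have := hr r h.1
        push_cast
        constructor <;> linarith)
    have h2 := piece_bound y P δ 0 (1 / 2) hP0 hδ le_rfl (by norm_num) le_rfl
      {r ∈ {r ∈ S | ¬ y r ≤ m + 1} | y r ≤ m + 3 / 2} (m + 1) 1 (Or.inl rfl)
      (fun r h r' h' => hsep r (by simp only [Finset.mem_filter] at h; exact h.1.1) r'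
        (by simp only [Finset.mem_filter] at h'; exact h'.1.1))
      (by
        intro r h
        simp only [Finset.mem_filter, not_le] at h
        push_cast
        constructor <;> linarith)
    have h3 := piece_bound y P δ (m + 1 - a) (1 / 2) hP0 hδ (by linarith) (by linarith) le_rfl
      {r ∈ {r ∈ S | ¬ y r ≤ m + 1} | ¬ y r ≤ m + 3 / 2} (m + 2) (-1) (Or.inr rfl)
      (fun r h r' h' => hsep r (by simp only [Finset.mem_filter] at h; exact h.1.1) r'
        (by simp only [Finset.mem_filter] at h'; exact h'.1.1))
      (by
        intro r h
        simp only [Finset.mem_filter, not_le] at h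
        have := hr r h.1.1
        push_cast
        constructor <;> linarith)
    rw [hF1] at h2 h3
    rw [hF0] at h1 h2
    linarith

/-- Well-spacing lemma, case `P ≥ 2`: if the `y_r` are `δ`-spaced, then
`∑_{y_r ∈ [x,y]} min(P, ‖y_r‖⁻¹) ≤ 2(y−x+1)(2P + δ⁻¹ log(eP/2))`, with the convention that
the summand equals `P` when `y_r` is an integer (i.e. `‖y_r‖⁻¹ = ∞`). -/
theorem well_spacing_large_P (y : ℕ → ℝ) (δ : ℝ) (hδ : 0 < δ)
    (hsep : ∀ r r' : ℕ, r ≠ r' → δ ≤ |y r - y r'|)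
    (P x X : ℝ) (hP : 2 ≤ P) (hxX : x ≤ X) :
    ∑' r : {r : ℕ // y r ∈ Set.Icc x X},
        (if distNearestInt (y r) = 0 then P else min P (distNearestInt (y r))⁻¹) ≤
      2 * (X - x + 1) * (2 * P + δ⁻¹ * Real.log (Real.exp 1 * P / 2)) := by
  have hlog : 0 ≤ Real.log (Real.exp 1 * P / 2) := by
    apply Real.log_nonneg
    have := Real.add_one_le_exp 1
    nlinarith
  have hi := inv_pos.mpr hδ
  have hB : 0 ≤ 2 * P + δ⁻¹ * Real.log (Real.exp 1 * P / 2) := by positivity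
  have hL : 0 ≤ X - x := sub_nonneg.mpr hxX
  apply tsum_le_of_sum_le' (by positivity)
  intro S
  change ∑ r ∈ S, gg P (distNearestInt (y r)) ≤ _
  have hmap : ∀ r ∈ S, ⌊y r - x⌋₊ ∈ Finset.range (⌊X - x⌋₊ + 1) := by
    intro r _
    rw [Finset.mem_range, Nat.lt_succ_iff]
    exact Nat.floor_le_floor (sub_le_sub_right r.2.2 x)
  rw [← Finset.sum_fiberwise_of_maps_to hmap]
  have hw : ∀ j ∈ Finset.range (⌊X - x⌋₊ + 1),
      ∑ r ∈ S.filter (fun r : {r : ℕ // y r ∈ Set.Icc x X} => ⌊y r - x⌋₊ = j), gg P (distNearestInt (y r)) ≤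
        4 * P + 2 * (δ⁻¹ * Real.log (Real.exp 1 * P / 2)) := by
    intro j _
    apply window_bound (fun r : {r : ℕ // y r ∈ Set.Icc x X} => y r) P δ (x + j) hP hδ
    · intro r _ r' _ hne
      exact hsep r r' (fun h => hne (Subtype.ext h))
    · intro r h
      have hj := (Finset.mem_filter.mp h).2
      have h0 : 0 ≤ y r - x := sub_nonneg.mpr r.2.1
      have h1 := Nat.floor_le h0
      have h2 := Nat.lt_floor_add_one (y r - x)
      rw [hj] at h1 h2
      constructor <;> linarith
  refine (Finset.sum_le_sum hw).trans ?_
  rw [Finset.sum_const, Finset.card_range, nsmul_eq_mul]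
  push_cast
  have := Nat.floor_le hL
  nlinarith [mul_le_mul_of_nonneg_right this hB]
end

section
/- Let {y_r : r = 0, 1, 2, …} be a set of real numbers such that there is δ > 0 with |y_r − y_{r'}| ≥ δ for all r ≠ r'. If 0 < P < 2 and y ≥ x are real numbers, then ∑_{y_r ∈ [x,y]} min(P, ‖y_r‖^{−1}) ≤ 2(y − x + 1)(P + δ^{−1}). -/
/-- Well-spacing lemma, case `0 < P < 2`: if the `y_r` are `δ`-spaced, then
`∑_{y_r ∈ [x,y]} min(P, ‖y_r‖⁻¹) ≤ 2(y−x+1)(P + δ⁻¹)`, with the convention that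
the summand equals `P` when `y_r` is an integer (i.e. `‖y_r‖⁻¹ = ∞`). -/
theorem well_spacing_small_P (y : ℕ → ℝ) (δ : ℝ) (hδ : 0 < δ)
    (hsep : ∀ r r' : ℕ, r ≠ r' → δ ≤ |y r - y r'|)
    (P x X : ℝ) (hP0 : 0 < P) (hP : P < 2) (hxX : x ≤ X) :
    ∑' r : {r : ℕ // y r ∈ Set.Icc x X},
        (if distNearestInt (y r) = 0 then P else min P (distNearestInt (y r))⁻¹) ≤
      2 * (X - x + 1) * (P + δ⁻¹) := by
  have hXx : 0 ≤ X - x := by linarith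
  have hδi : 0 < δ⁻¹ := inv_pos.mpr hδ
  have key : ∀ s : Finset {r : ℕ // y r ∈ Set.Icc x X},
      (s.card : ℝ) ≤ (X - x) * δ⁻¹ + 1 := by
    intro s
    have hcard : s.card ≤ (Finset.range (⌊(X - x) / δ⌋₊ + 1)).card := by
      apply Finset.card_le_card_of_injOn (fun r : {r : ℕ // y r ∈ Set.Icc x X} => ⌊(y r - x) / δ⌋₊)
      · intro r _
        have h := r.2.2
        simp only [Finset.coe_range, Set.mem_Iio]
        apply Nat.lt_succ_of_le
        apply Nat.floor_le_floor
        gcongr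
      · intro a _ b _ hab
        by_contra hne
        have h1 := hsep a b (fun h => hne (Subtype.ext h))
        have ha : 0 ≤ (y a - x) / δ := div_nonneg (by linarith [a.2.1]) hδ.le
        have hb : 0 ≤ (y b - x) / δ := div_nonneg (by linarith [b.2.1]) hδ.le
        have a1 := Nat.floor_le ha
        have a2 := Nat.lt_floor_add_one ((y a - x) / δ)
        have b1 := Nat.floor_le hb
        have b2 := Nat.lt_floor_add_one ((y b - x) / δ)
        simp only at hab
        rw [hab] at a1 a2
        have h2 : |(y a - x) / δ - (y b - x) / δ| < 1 := by
          rw [abs_lt]; constructor <;> linarith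
        rw [← sub_div, abs_div, abs_of_pos hδ, div_lt_one hδ] at h2
        have h3 : y a - x - (y b - x) = y a - y b := by ring
        rw [h3] at h2
        linarith
    rw [Finset.card_range] at hcard
    have h1 : (s.card : ℝ) ≤ (⌊(X - x) / δ⌋₊ : ℝ) + 1 := by exact_mod_cast hcard
    have h2 := Nat.floor_le (div_nonneg hXx hδ.le)
    rw [div_eq_mul_inv] at h1 h2
    linarith
  have hA : 0 ≤ (X - x) * δ⁻¹ := by positivity
  have hB : 0 ≤ (X - x) * P := by positivity
  refine tsum_le_of_sum_le' (by positivity) ?_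
  intro s
  calc _ ≤ ∑ _r ∈ s, P := by
        apply Finset.sum_le_sum
        intro r _
        split_ifs
        · exact le_rfl
        · exact min_le_left _ _
    _ = s.card * P := by simp
    _ ≤ ((X - x) * δ⁻¹ + 1) * P := by gcongr; exact key s
    _ ≤ _ := by nlinarith
end

section
/- Let χ be a Dirichlet character modulo q. Then there exists an integer L̃ such that χ(1 + C₁(q)·x) = e^{2πi L̃ x / D₁(q)} for all integers x. Moreover, if χ is primitive, then gcd(L̃, D₁(q)) = 1. -/
open Complex

/-- `C₁(q) = ∏_{p^a ∥ q} p^⌈a/2⌉` (multiplicative extension of `C₁(p^a) := p^⌈a/2⌉`). -/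
def C1 (q : ℕ) : ℕ := q.factorization.prod fun p a => p ^ ((a + 1) / 2)

/-- `D₁(q) = ∏_{p^a ∥ q} p^{a−⌈a/2⌉}` (multiplicative extension of `D₁(p^a) := p^{a−⌈a/2⌉}`). -/
def D1 (q : ℕ) : ℕ := q.factorization.prod fun p a => p ^ (a / 2)

theorem C1_mul_D1 (q : ℕ) (hq : q ≠ 0) : C1 q * D1 q = q := by
  unfold C1 D1
  rw [← Finsupp.prod_mul]
  conv_rhs => rw [← Nat.prod_factorization_pow_eq_self hq]
  refine Finsupp.prod_congr fun p _ => ?_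
  rw [← pow_add]
  congr 1
  omega

theorem D1_dvd_C1 (q : ℕ) : D1 q ∣ C1 q := by
  unfold C1 D1
  refine Finset.prod_dvd_prod_of_dvd _ _ fun p _ => ?_
  exact pow_dvd_pow _ (by omega)

theorem postnikov_linear (q : ℕ) (hq : q ≠ 0) (χ : DirichletCharacter ℂ q) :
    ∃ Lt : ℤ,
      (∀ x : ℤ, χ (((1 + (C1 q : ℤ) * x : ℤ) : ZMod q)) =
        Complex.exp (2 * Real.pi * I * (Lt : ℂ) * (x : ℂ) / (D1 q : ℂ))) ∧
      (χ.IsPrimitive → Int.gcd Lt (D1 q) = 1) := by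
  have hCD := C1_mul_D1 q hq
  obtain ⟨k, hk⟩ := D1_dvd_C1 q
  have hD0 : D1 q ≠ 0 := by
    intro h; rw [h] at hCD; simp at hCD; exact hq hCD.symm
  haveI : NeZero (D1 q) := ⟨hD0⟩
  have hCDz : ((C1 q : ℕ) : ZMod q) * ((D1 q : ℕ) : ZMod q) = 0 := by
    rw [← Nat.cast_mul, hCD]; simp
  have hCC : ((C1 q : ℕ) : ZMod q) * ((C1 q : ℕ) : ZMod q) = 0 := by
    nth_rewrite 2 [hk]
    rw [Nat.cast_mul, ← mul_assoc, hCDz, zero_mul]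
  let f : Multiplicative ℤ →* ℂ :=
    { toFun := fun x => χ (((1 + (C1 q : ℤ) * x.toAdd : ℤ) : ZMod q))
      map_one' := by simp
      map_mul' := by
        intro x y
        rw [← map_mul]
        congr 1
        push_cast [toAdd_mul]
        linear_combination (-(x.toAdd : ZMod q) * (y.toAdd : ZMod q)) * hCC }
  let g := f.toHomUnits
  have hg : ∀ x : ℤ, χ (((1 + (C1 q : ℤ) * x : ℤ) : ZMod q))
      = ((g (Multiplicative.ofAdd 1) ^ x : ℂˣ) : ℂ) := by
    intro x
    rw [← map_zpow, ← ofAdd_zsmul]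
    simp [g, f]
  have hroot : g (Multiplicative.ofAdd 1) ∈ rootsOfUnity (D1 q) ℂ := by
    rw [_root_.mem_rootsOfUnity]
    ext
    have := hg (D1 q)
    rw [zpow_natCast] at this
    rw [← this]
    push_cast
    rw [hCDz]
    simp
  rw [Complex.mem_rootsOfUnity] at hroot
  obtain ⟨i, -, hi⟩ := hroot
  have key : ∀ x : ℤ, χ (((1 + (C1 q : ℤ) * x : ℤ) : ZMod q)) =
        Complex.exp (2 * Real.pi * I * ((i : ℤ) : ℂ) * (x : ℂ) / (D1 q : ℂ)) := by
    intro x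
    rw [hg, Units.val_zpow_eq_zpow_val, ← hi, ← Complex.exp_int_mul]
    congr 1
    push_cast
    ring
  refine ⟨i, key, fun hprim => ?_⟩
  by_contra hne
  rw [Int.gcd_natCast_natCast] at hne
  obtain ⟨p, hp, hpd⟩ := Nat.exists_prime_and_dvd hne
  obtain ⟨a, ha⟩ := hpd.trans (Nat.gcd_dvd_left _ _)
  obtain ⟨b, hb⟩ := hpd.trans (Nat.gcd_dvd_right _ _)
  have hb0 : b ≠ 0 := by rintro rfl; simp at hb; exact hD0 hb
  have hq' : q = C1 q * b * p := by rw [hb] at hCD; linarith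
  have hdvd : C1 q * b ∣ q := ⟨p, hq'⟩
  haveI : NeZero q := ⟨hq⟩
  have hfac : χ.FactorsThrough (C1 q * b) := by
    rw [DirichletCharacter.factorsThrough_iff_ker_unitsMap hdvd]
    intro u hu
    rw [MonoidHom.mem_ker] at hu ⊢
    ext
    have h1 := congrArg Units.val hu
    rw [ZMod.unitsMap_val, Units.val_one] at h1
    have h2 : (((u : ZMod q).val : ℤ) : ZMod (C1 q * b)) = ((1 : ℤ) : ZMod (C1 q * b)) := by
      rw [ZMod.cast_eq_val] at h1
      push_cast
      exact h1
    rw [ZMod.intCast_eq_intCast_iff_dvd_sub] at h2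
    obtain ⟨c, hc⟩ := h2
    have h3 : (u : ZMod q) = ((1 + (C1 q : ℤ) * (b * (-c)) : ℤ) : ZMod q) := by
      have : (1 + (C1 q : ℤ) * (b * (-c)) : ℤ) = ((u : ZMod q).val : ℤ) := by
        push_cast at hc; linarith
      rw [this]; simp
    rw [MulChar.coe_toUnitHom, h3, key, Units.val_one, Complex.exp_eq_one_iff]
    refine ⟨a * (-c), ?_⟩
    rw [hb, ha]
    have : (p : ℂ) ≠ 0 := by exact_mod_cast hp.ne_zero
    have : (b : ℂ) ≠ 0 := by exact_mod_cast hb0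
    push_cast
    field_simp
  have hle : χ.conductor ≤ C1 q * b := Nat.sInf_le hfac
  rw [hprim] at hle
  have hpos : 0 < C1 q * b := Nat.pos_of_dvd_of_pos hdvd (Nat.pos_of_ne_zero hq)
  have := hp.two_le
  nlinarith
end

section
/- Let χ be a Dirichlet character modulo q. Then there exist integers L₀ and L such that χ(1 + C(q)·x) = e^{4πi L₀ x/(C(q)D(q)) + 2πi L x²/D(q)} for all integers x. Moreover, if χ is primitive, then L₀ and L can be chosen so that gcd(L, D(q)) = 1. -/
open Complex

/-- `C(q) = ∏_{p^a ∥ q} p^⌈a/3⌉` (multiplicative extension of `C(p^a) := p^⌈a/3⌉`). -/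
def CC (q : ℕ) : ℕ := q.factorization.prod fun p a => p ^ ((a + 2) / 3)

/-- Multiplicative extension of `D(p^a) := 1` if `a = 1`, `2^{a−2⌈a/3⌉+1}` if `p = 2, a > 1`,
and `p^{a−2⌈a/3⌉}` if `p ≠ 2, a > 1`. -/
def DD (q : ℕ) : ℕ := q.factorization.prod fun p a =>
  if a = 1 then 1
  else if p = 2 then p ^ (a - 2 * ((a + 2) / 3) + 1)
  else p ^ (a - 2 * ((a + 2) / 3))


noncomputable def ee (z : ℂ) : ℂ := exp (2 * Real.pi * I * z)

lemma ee_add (z w : ℂ) : ee (z + w) = ee z * ee w := by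
  unfold ee; rw [mul_add, Complex.exp_add]

lemma ee_int (n : ℤ) : ee (n : ℂ) = 1 := by
  unfold ee; rw [Complex.exp_eq_one_iff]; exact ⟨n, by ring⟩

lemma ee_add_int (z : ℂ) (n : ℤ) : ee (z + n) = ee z := by
  rw [ee_add, ee_int, mul_one]

lemma ee_nat_mul (k : ℕ) (z : ℂ) : ee (k * z) = ee z ^ k := by
  unfold ee; rw [← Complex.exp_nat_mul]; congr 1; ring

lemma root_ee (N : ℕ) (hN : N ≠ 0) (z : ℂ) (hz : z ^ N = 1) : ∃ l : ℤ, z = ee (l / N) := by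
  have h := Complex.isPrimitiveRoot_exp N hN
  have : NeZero N := ⟨hN⟩
  obtain ⟨i, _, hi⟩ := h.eq_pow_of_pow_eq_one hz
  refine ⟨i, ?_⟩
  rw [← hi, ← Complex.exp_nat_mul]
  unfold ee; congr 1; push_cast; ring

lemma key (N : ℕ) (hN : N ≠ 0) (C : ℤ) (f : ℤ → ℂ)
    (hf : ∀ x y, (N : ℤ) ∣ x - y → f x = f y)
    (hmul : ∀ x y, f (x + y + C * x * y) = f x * f y) (h0 : f 0 = 1)
    (ψ : ℤ → ℤ) (hψ0 : ψ 0 = 0) (hψ : ∀ x y, (N : ℤ) ∣ ψ (x + y + C * x * y) - (ψ x + ψ y))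
    (hinj : ∀ x y, (N : ℤ) ∣ ψ x - ψ y → (N : ℤ) ∣ x - y) :
    ∃ l : ℤ, ∀ x, f x = ee (l * ψ x / N) := by
  have : NeZero N := ⟨hN⟩
  obtain ⟨x1, hx1⟩ : ∃ x1 : ℤ, (N : ℤ) ∣ ψ x1 - 1 := by
    have hi : Function.Injective (fun z : ZMod N => ((ψ (z.val : ℤ) : ℤ) : ZMod N)) := by
      intro z w h
      have h2 := (ZMod.intCast_eq_intCast_iff_dvd_sub _ _ _).1 h.symm
      have h3 := (ZMod.intCast_eq_intCast_iff_dvd_sub _ _ _).2 (hinj _ _ h2)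
      simpa using h3.symm
    obtain ⟨z, hz⟩ := (Finite.injective_iff_surjective.1 hi) 1
    refine ⟨z.val, ?_⟩
    apply (ZMod.intCast_eq_intCast_iff_dvd_sub _ _ _).1
    simpa using hz.symm
  have hk : ∀ k : ℕ, ∃ x : ℤ, (N : ℤ) ∣ ψ x - k ∧ f x = f x1 ^ k := by
    intro k
    induction k with
    | zero => exact ⟨0, by simp [hψ0], by simp [h0]⟩
    | succ k ih =>
      obtain ⟨x, hx, hfx⟩ := ih
      refine ⟨x + x1 + C * x * x1, ?_, ?_⟩
      · have := dvd_add (hψ x x1) (dvd_add hx hx1)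
        have e : ψ (x + x1 + C * x * x1) - ((k + 1 : ℕ) : ℤ) = ψ (x + x1 + C * x * x1) -
            (ψ x + ψ x1) + (ψ x - k + (ψ x1 - 1)) := by push_cast; abel
        rw [e]; exact this
      · rw [hmul, hfx, pow_succ]
  have hk' : ∀ (k : ℕ) (y : ℤ), (N : ℤ) ∣ ψ y - k → f y = f x1 ^ k := by
    intro k y hy
    obtain ⟨x, hx, hfx⟩ := hk k
    rw [← hfx]
    apply hf; apply hinj
    have := dvd_sub hy hx
    have e : ψ y - ψ x = ψ y - k - (ψ x - k) := by abel
    rw [e]; exact this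
  have hN1 : f x1 ^ N = 1 := by
    rw [← hk' N 0 (by simp [hψ0]), h0]
  obtain ⟨l, hl⟩ := root_ee N hN _ hN1
  refine ⟨l, fun x => ?_⟩
  have hNz : (N : ℤ) ≠ 0 := by exact_mod_cast hN
  obtain ⟨k, hk0⟩ := Int.eq_ofNat_of_zero_le (Int.emod_nonneg (ψ x) hNz)
  have hdm := Int.emod_add_mul_ediv (ψ x) N
  rw [hk0] at hdm
  rw [hk' k x ⟨ψ x / N, by linarith⟩, hl, ← ee_nat_mul, ← ee_add_int _ (l * (ψ x / N))]
  congr 1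
  have : (ψ x : ℂ) = k + N * ((ψ x / N : ℤ) : ℂ) := by exact_mod_cast hdm.symm
  have hNc : (N : ℂ) ≠ 0 := by exact_mod_cast hN
  rw [this]; push_cast; field_simp

structure GG (q : ℕ) (g : ℤ → ℂ) : Prop where
  per : ∀ x y, (q : ℤ) ∣ x - y → g x = g y
  mul : ∀ x y, g (x * y) = g x * g y
  one : g 1 = 1

def Pr (q : ℕ) (g : ℤ → ℂ) : Prop := ∀ p : ℕ, p.Prime → p ∣ q → ∃ x : ℤ, g (1 + (q / p : ℕ) * x) ≠ 1

def PCon (C D q : ℕ) (g : ℤ → ℂ) : Prop := ∃ L0 L : ℤ,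
  (∀ x : ℤ, g (1 + C * x) = ee (2 * L0 * x / (C * D) + L * x ^ 2 / D)) ∧
  (Pr q g → IsCoprime L (D : ℤ))

lemma main_pp (p M C D q : ℕ) (α β : ℤ) (g : ℤ → ℂ) (hp : p.Prime) (hM : M ≠ 0) (hC : C ≠ 0)
    (hq : q = C * (p * M)) (hg : GG q g) (hN : p * M ∣ C ^ 2) (hαβ : C * α = 2 * β)
    (hα : ¬ (p : ℤ) ∣ α) (hβ : (p : ℤ) ∣ β) (hNp : ∃ k, p * M = p ^ k) (hDp : ∃ k, D = p ^ k)
    (hβD : β * D = (p * M : ℕ)) : PCon C D q g := by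
  have hN0 : p * M ≠ 0 := mul_ne_zero hp.ne_zero hM
  have hpi : Prime (p : ℤ) := Nat.prime_iff_prime_int.1 hp
  obtain ⟨l, hl⟩ := key (p * M) hN0 C (fun x => g (1 + C * x))
    (by
      intro x y ⟨t, ht⟩
      apply hg.per
      refine ⟨t, ?_⟩
      rw [hq]; push_cast at ht ⊢
      linear_combination (C : ℤ) * ht)
    (by
      intro x y
      rw [← hg.mul]; congr 1; ring)
    (by simp [hg.one]) (fun x => α * x - β * x ^ 2) (by simp)
    (by
      intro x y
      have h1 : ((p * M : ℕ) : ℤ) ∣ (C : ℤ) ^ 2 := by exact_mod_cast hN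
      have : α * (x + y + C * x * y) - β * (x + y + C * x * y) ^ 2 -
        (α * x - β * x ^ 2 + (α * y - β * y ^ 2)) =
        (C : ℤ) ^ 2 * (-α * x * y * (x + y) - β * x ^ 2 * y ^ 2) := by
        linear_combination (x * y + C * x * y * (x + y)) * hαβ
      show _ ∣ _
      rw [this]
      exact h1.mul_right _)
    (by
      intro x y h
      have h1 : α * x - β * x ^ 2 - (α * y - β * y ^ 2) = (x - y) * (α - β * (x + y)) := by ring
      simp only [h1] at h
      refine IsCoprime.dvd_of_dvd_mul_right ?_ h
      obtain ⟨k, hk⟩ := hNp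
      rw [hk]; push_cast
      apply IsCoprime.pow_left
      rw [hpi.coprime_iff_not_dvd]
      intro h2
      exact hα ((dvd_sub_left (hβ.mul_right _)).1 h2))
  have hD0 : (D : ℂ) ≠ 0 := by
    obtain ⟨k, hk⟩ := hDp
    rw [hk]; exact_mod_cast pow_ne_zero _ hp.ne_zero
  have hCc : (C : ℂ) ≠ 0 := by exact_mod_cast hC
  have hNc : ((p * M : ℕ) : ℂ) ≠ 0 := by exact_mod_cast hN0
  have e1 : (β : ℂ) * D = (p * M : ℕ) := by exact_mod_cast hβD
  have e2 : (C : ℂ) * α = 2 * β := by exact_mod_cast hαβ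
  refine ⟨l, -l, fun x => ?_, fun hpr => ?_⟩
  · have := hl x
    rw [this]; congr 1
    rw [← e1] at hNc ⊢
    have hb : (β : ℂ) ≠ 0 := left_ne_zero_of_mul hNc
    field_simp
    push_cast
    linear_combination (l * x : ℂ) * e2
  · obtain ⟨k, hk⟩ := hDp
    rw [hk]; push_cast
    apply IsCoprime.pow_right
    rw [isCoprime_comm, hpi.coprime_iff_not_dvd, dvd_neg]
    rintro ⟨t, ht⟩
    obtain ⟨x, hx⟩ := hpr p hp (hq ▸ ⟨C * M, by ring⟩)
    have hqp : q / p = C * M := by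
      rw [hq, show C * (p * M) = p * (C * M) by ring]
      exact Nat.mul_div_cancel_left _ hp.pos
    apply hx
    have := hl (M * x)
    rw [hqp]
    push_cast
    rw [mul_assoc, this, ← ee_int (t * (α * x - β * M * x ^ 2)), ht]
    congr 1
    push_cast
    have hMc : (M : ℂ) ≠ 0 := by exact_mod_cast hM
    have hpc : (p : ℂ) ≠ 0 := by exact_mod_cast hp.ne_zero
    field_simp

lemma CC_pp (p a : ℕ) (hp : p.Prime) (ha : a ≠ 0) : CC (p ^ a) = p ^ ((a + 2) / 3) := by
  unfold CC
  rw [hp.factorization_pow, Finsupp.prod, Finsupp.support_single _ ha]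
  simp

lemma DD_pp (p a : ℕ) (hp : p.Prime) (ha : a ≠ 0) : DD (p ^ a) = if a = 1 then 1
    else if p = 2 then p ^ (a - 2 * ((a + 2) / 3) + 1)
    else p ^ (a - 2 * ((a + 2) / 3)) := by
  unfold DD
  rw [hp.factorization_pow, Finsupp.prod, Finsupp.support_single _ ha]
  simp

lemma fac_mul (h : ℕ → ℕ → ℕ) (m n : ℕ) (hmn : m.Coprime n) :
    (m * n).factorization.prod h = m.factorization.prod h * n.factorization.prod h := by
  rw [Nat.factorization_mul_of_coprime hmn, Finsupp.prod_add_index_of_disjoint]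
  simpa using hmn.disjoint_primeFactors

lemma CC_mul (m n : ℕ) (hmn : m.Coprime n) : CC (m * n) = CC m * CC n := fac_mul _ m n hmn
lemma DD_mul (m n : ℕ) (hmn : m.Coprime n) : DD (m * n) = DD m * DD n := fac_mul _ m n hmn

lemma fac_dvd (h : ℕ → ℕ → ℕ) (q : ℕ) (hq : q ≠ 0) (hh : ∀ p a, a ≠ 0 → h p a ∣ p ^ a) :
    q.factorization.prod h ∣ q := by
  conv_rhs => rw [← Nat.prod_factorization_pow_eq_self hq]
  apply Finset.prod_dvd_prod_of_dvd
  intro p hp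
  exact hh _ _ (Finsupp.mem_support_iff.1 hp)

lemma CC_dvd (q : ℕ) (hq : q ≠ 0) : CC q ∣ q := by
  apply fac_dvd _ q hq
  intro p a ha
  exact pow_dvd_pow _ (by omega)

lemma DD_dvd (q : ℕ) (hq : q ≠ 0) : DD q ∣ q := by
  apply fac_dvd _ q hq
  intro p a ha
  split_ifs
  · simp
  · exact pow_dvd_pow _ (by omega)
  · exact pow_dvd_pow _ (by omega)

lemma ee_half : ee (1 / 2) = -1 := by
  unfold ee
  rw [show (2 * Real.pi * I * (1 / 2) : ℂ) = Real.pi * I by ring, Complex.exp_pi_mul_I]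

/-- Values of `ee` at quarter-integers only depend on the numerator modulo 4. -/
lemma ee_quarter (k r : ℤ) (h : (4 : ℤ) ∣ k - r) : ee ((k : ℂ) / 4) = ee ((r : ℂ) / 4) := by
  obtain ⟨t, ht⟩ := h
  rw [← ee_add_int ((r : ℂ) / 4) t]
  congr 1
  have : (k : ℂ) = r + 4 * t := by
    have : k = r + 4 * t := by linarith
    rw [this]; push_cast; ring
  rw [this]; ring

lemma case4 (g : ℤ → ℂ) (hg : GG 4 g) : PCon 2 2 4 g := by
  have h9 : g 3 * g 3 = 1 := by
    rw [← hg.mul, ← hg.one]; apply hg.per; norm_num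
  have hodd : ∀ x : ℤ, x % 2 = 1 → g (1 + 2 * x) = g 3 := fun x hx => hg.per _ _ (by push_cast; omega)
  have heven : ∀ x : ℤ, x % 2 = 0 → g (1 + 2 * x) = 1 := fun x hx => by
    rw [← hg.one]; exact hg.per _ _ (by push_cast; omega)
  rcases mul_self_eq_one_iff.1 h9 with h | h
  · refine ⟨0, 0, fun x => ?_, fun hpr => ?_⟩
    · have : ee (2 * (0 : ℤ) * x / ((2 : ℕ) * (2 : ℕ)) + (0 : ℤ) * x ^ 2 / (2 : ℕ)) = 1 := by
        simpa using ee_int 0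
      rw [this]
      push_cast
      rcases Int.emod_two_eq_zero_or_one x with hx | hx
      · exact heven x hx
      · rw [hodd x hx, h]
    · exfalso
      obtain ⟨x, hx⟩ := hpr 2 Nat.prime_two (by norm_num)
      apply hx
      norm_num
      rcases Int.emod_two_eq_zero_or_one x with hx | hx
      · exact heven x hx
      · rw [hodd x hx, h]
  · refine ⟨0, 1, fun x => ?_, fun _ => isCoprime_one_left⟩
    have : ee (2 * (0 : ℤ) * x / ((2 : ℕ) * (2 : ℕ)) + (1 : ℤ) * x ^ 2 / (2 : ℕ)) =
        ee (((2 * x ^ 2 : ℤ) : ℂ) / 4) := by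
      congr 1; push_cast; ring
    rw [this]
    push_cast
    rcases Int.emod_two_eq_zero_or_one x with hx | hx
    · rw [heven x hx]
      obtain ⟨t, rfl⟩ : ∃ t, x = 2 * t := ⟨x / 2, by omega⟩
      have := ee_quarter (2 * (2 * t) ^ 2) 0 ⟨2 * t ^ 2, by ring⟩
      push_cast at this ⊢
      rw [this]
      simpa using (ee_int 0).symm
    · rw [hodd x hx, h]
      obtain ⟨t, rfl⟩ : ∃ t, x = 2 * t + 1 := ⟨x / 2, by omega⟩
      have := ee_quarter (2 * (2 * t + 1) ^ 2) 2 ⟨2 * t ^ 2 + 2 * t, by ring⟩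
      push_cast at this ⊢
      rw [this, ← ee_half]; norm_num

lemma quarter_vals (k : ℤ) : (k % 4 = 0 → ee ((k : ℂ) / 4) = 1) ∧ (k % 4 = 2 → ee ((k : ℂ) / 4) = -1) := by
  constructor
  · intro h
    rw [ee_quarter k 0 (by omega)]
    simpa using ee_int 0
  · intro h
    rw [ee_quarter k 2 (by omega), ← ee_half]
    norm_num

lemma case8_aux (g : ℤ → ℂ) (L0 L : ℤ) (h : ∀ x : ℤ, ∀ r : ℤ, (r = 0 ∨ r = 1 ∨ r = 2 ∨ r = 3) → x % 4 = r →
    g (1 + 2 * x) = ee (((L0 * r + L * r ^ 2 : ℤ) : ℂ) / 4)) (x : ℤ) :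
    g (1 + (2 : ℕ) * x) = ee (2 * L0 * x / ((2 : ℕ) * (4 : ℕ)) + L * x ^ 2 / (4 : ℕ)) := by
  push_cast
  rw [h x (x % 4) (by omega) rfl]
  rw [← ee_quarter (L0 * x + L * x ^ 2)]
  · congr 1; push_cast; ring
  · obtain ⟨t, ht⟩ : ∃ t, x = x % 4 + 4 * t := ⟨x / 4, by omega⟩
    generalize x % 4 = r at ht
    subst ht
    exact ⟨L0 * t + L * (2 * r * t + 4 * t ^ 2), by ring⟩

lemma case8 (g : ℤ → ℂ) (hg : GG 8 g) : PCon 2 4 8 g := by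
  have h3 : g 3 * g 3 = 1 := by
    rw [← hg.mul, ← hg.one]; apply hg.per; norm_num
  have h5 : g 5 * g 5 = 1 := by
    rw [← hg.mul, ← hg.one]; apply hg.per; norm_num
  have h7 : g 7 = g 3 * g 5 := by
    rw [← hg.mul]; apply hg.per; norm_num
  have hx0 : ∀ x : ℤ, x % 4 = 0 → g (1 + 2 * x) = 1 := fun x hx => by
    rw [← hg.one]; exact hg.per _ _ (by push_cast; omega)
  have hx1 : ∀ x : ℤ, x % 4 = 1 → g (1 + 2 * x) = g 3 := fun x hx => hg.per _ _ (by push_cast; omega)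
  have hx2 : ∀ x : ℤ, x % 4 = 2 → g (1 + 2 * x) = g 5 := fun x hx => hg.per _ _ (by push_cast; omega)
  have hx3 : ∀ x : ℤ, x % 4 = 3 → g (1 + 2 * x) = g 3 * g 5 := fun x hx => by
    rw [← h7]; exact hg.per _ _ (by push_cast; omega)
  have np : g 5 = 1 → ¬ Pr 8 g := by
    intro h hpr
    obtain ⟨x, hx⟩ := hpr 2 Nat.prime_two (by norm_num)
    apply hx
    norm_num
    rcases Int.emod_two_eq_zero_or_one x with hx | hx
    · rw [← hg.one]; exact hg.per _ _ (by push_cast; omega)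
    · rw [← h]; exact hg.per _ _ (by push_cast; omega)
  rcases mul_self_eq_one_iff.1 h3 with h | h <;> rcases mul_self_eq_one_iff.1 h5 with h' | h'
  · refine ⟨0, 0, case8_aux g _ _ ?_, fun hp => absurd hp (np h')⟩
    rintro x r (rfl | rfl | rfl | rfl) hr
    · rw [hx0 x hr, (quarter_vals _).1 (by norm_num)]
    · rw [hx1 x hr, (quarter_vals _).1 (by norm_num), h]
    · rw [hx2 x hr, (quarter_vals _).1 (by norm_num), h']
    · rw [hx3 x hr, (quarter_vals _).1 (by norm_num), h, h', one_mul]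
  · refine ⟨1, 3, case8_aux g _ _ ?_, fun _ => ⟨-1, 1, by norm_num⟩⟩
    rintro x r (rfl | rfl | rfl | rfl) hr
    · rw [hx0 x hr, (quarter_vals _).1 (by norm_num)]
    · rw [hx1 x hr, (quarter_vals _).1 (by norm_num), h]
    · rw [hx2 x hr, (quarter_vals _).2 (by norm_num), h']
    · rw [hx3 x hr, (quarter_vals _).2 (by norm_num), h, h', one_mul]
  · refine ⟨0, 2, case8_aux g _ _ ?_, fun hp => absurd hp (np h')⟩
    rintro x r (rfl | rfl | rfl | rfl) hr
    · rw [hx0 x hr, (quarter_vals _).1 (by norm_num)]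
    · rw [hx1 x hr, (quarter_vals _).2 (by norm_num), h]
    · rw [hx2 x hr, (quarter_vals _).1 (by norm_num), h']
    · rw [hx3 x hr, (quarter_vals _).2 (by norm_num), h, h', mul_one]
  · refine ⟨1, 1, case8_aux g _ _ ?_, fun _ => isCoprime_one_left⟩
    rintro x r (rfl | rfl | rfl | rfl) hr
    · rw [hx0 x hr, (quarter_vals _).1 (by norm_num)]
    · rw [hx1 x hr, (quarter_vals _).2 (by norm_num), h]
    · rw [hx2 x hr, (quarter_vals _).2 (by norm_num), h']
    · rw [hx3 x hr, (quarter_vals _).1 (by norm_num), h, h']; norm_num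

lemma pp_case (p a : ℕ) (hp : p.Prime) (ha : 0 < a) (g : ℤ → ℂ) (hg : GG (p ^ a) g) :
    PCon (CC (p ^ a)) (DD (p ^ a)) (p ^ a) g := by
  rw [CC_pp p a hp ha.ne', DD_pp p a hp ha.ne']
  by_cases h1 : a = 1
  · subst h1
    refine ⟨0, 0, fun x => ?_, fun _ => by simpa using isCoprime_one_right⟩
    have : ee 0 = 1 := by simpa using ee_int 0
    simp only [Int.cast_zero, zero_mul, mul_zero, zero_div, add_zero, this]
    rw [← hg.one]
    exact hg.per _ _ ⟨x, by norm_num⟩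
  rw [if_neg h1]
  by_cases h2 : p = 2
  · subst h2
    rw [if_pos rfl]
    by_cases h4 : a = 2
    · subst h4; exact case4 g hg
    by_cases h8 : a = 3
    · subst h8; exact case8 g hg
    obtain ⟨c, hc⟩ : ∃ c, (a + 2) / 3 = c := ⟨_, rfl⟩
    rw [hc]
    refine main_pp 2 (2 ^ (a - c - 1)) _ _ _ 1 (2 ^ (c - 1)) g hp (by positivity) (by positivity)
      ?_ hg ?_ ?_ (by norm_num) ?_ ⟨a - c, ?_⟩ ⟨_, rfl⟩ ?_
    · rw [← pow_succ', ← pow_add]; congr 1; omega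
    · rw [← pow_succ', ← pow_mul]; exact pow_dvd_pow _ (by omega)
    · push_cast
      rw [← pow_succ', mul_one]; congr 1; omega
    · exact dvd_pow_self _ (by omega)
    · rw [← pow_succ']; congr 1; omega
    · push_cast
      rw [← pow_succ', ← pow_add]; congr 1; omega
  · rw [if_neg h2]
    obtain ⟨c, hc⟩ : ∃ c, (a + 2) / 3 = c := ⟨_, rfl⟩
    rw [hc]
    have h0 := hp.pos
    refine main_pp p (p ^ (a - c - 1)) _ _ _ 2 (p ^ c) g hp (by positivity) (by positivity)
      ?_ hg ?_ ?_ ?_ ?_ ⟨a - c, ?_⟩ ⟨_, rfl⟩ ?_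
    · rw [← pow_succ', ← pow_add]; congr 1; omega
    · rw [← pow_succ', ← pow_mul]; exact pow_dvd_pow _ (by omega)
    · push_cast; ring
    · intro h
      have h' : p ∣ 2 := by exact_mod_cast h
      exact h2 ((Nat.prime_dvd_prime_iff_eq hp Nat.prime_two).1 h')
    · exact dvd_pow_self _ (by omega)
    · rw [← pow_succ']; congr 1; omega
    · push_cast
      rw [← pow_succ', ← pow_add]; congr 1; omega

/-- Restriction of a periodic multiplicative function to one coprime factor of the modulus. -/
lemma comp_GG (m n : ℕ) (g : ℤ → ℂ) (hg : GG (m * n) g) (e f : ℤ) (hef : e + f = 1)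
    (he : (n : ℤ) ∣ e) (hf : (m : ℤ) ∣ f) : GG m (fun x => g (x * e + f)) := by
  obtain ⟨u, hu⟩ := he
  obtain ⟨v, hv⟩ := hf
  have hfe : f = 1 - e := by linarith
  refine ⟨?_, ?_, ?_⟩
  · rintro x y ⟨t, ht⟩
    apply hg.per
    refine ⟨t * u, ?_⟩
    push_cast
    linear_combination e * ht + m * t * hu
  · intro x y
    rw [← hg.mul]
    apply hg.per
    refine ⟨u * v * (x * y - x - y + 1), ?_⟩
    push_cast
    have : (x * y * e + f) - (x * e + f) * (y * e + f) = e * f * (x * y - x - y + 1) := by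
      rw [hfe]; ring
    rw [this, hu, hv]; ring
  · simp [hef, hg.one]

lemma comp_Pr (m n : ℕ) (hm : m ≠ 0) (hn : n ≠ 0) (g g1 g2 : ℤ → ℂ) (h1 : GG m g1) (h2 : GG n g2)
    (hg : ∀ x, g x = g1 x * g2 x) (hpr : Pr (m * n) g) : Pr m g1 := by
  rintro p hp ⟨k, rfl⟩
  obtain ⟨x, hx⟩ := hpr p hp ⟨k * n, by ring⟩
  refine ⟨n * x, fun h => hx ?_⟩
  rw [mul_assoc, Nat.mul_div_cancel_left _ hp.pos, hg]
  rw [Nat.mul_div_cancel_left _ hp.pos] at h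
  have e2 : g2 (1 + ((k * n : ℕ) : ℤ) * x) = 1 := by
    rw [← h2.one]; apply h2.per; exact ⟨k * x, by push_cast; ring⟩
  rw [e2, mul_one, ← h]; congr 1; push_cast; ring

lemma mul_case (m n : ℕ) (hm : m ≠ 0) (hn : n ≠ 0) (hmn : m.Coprime n)
    (ihm : ∀ g, GG m g → PCon (CC m) (DD m) m g) (ihn : ∀ g, GG n g → PCon (CC n) (DD n) n g)
    (g : ℤ → ℂ) (hg : GG (m * n) g) : PCon (CC (m * n)) (DD (m * n)) (m * n) g := by
  obtain ⟨a, b, hab⟩ := Nat.isCoprime_iff_coprime.2 hmn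
  have hg1 := comp_GG m n g hg (b * n) (a * m) (by linarith) ⟨b, by ring⟩ ⟨a, by ring⟩
  have hg2 := comp_GG n m g (by rwa [mul_comm]) (a * m) (b * n) (by linarith) ⟨a, by ring⟩ ⟨b, by ring⟩
  have hgg : ∀ x, g x = g (x * (b * n) + a * m) * g (x * (a * m) + b * n) := by
    intro x
    rw [← hg.mul]
    apply hg.per
    refine ⟨-a * b * (x - 1) ^ 2, ?_⟩
    have hb : b * n = 1 - a * m := by linarith
    have : -a * b * (x - 1) ^ 2 = -(a * b) * (x - 1) ^ 2 := by ring
    push_cast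
    have e2 : (m * n : ℤ) * (-a * b * (x - 1) ^ 2) = - (a * m) * (b * n) * (x - 1) ^ 2 := by ring
    rw [e2, hb]; ring
  obtain ⟨K0, K, hK, hK'⟩ := ihm _ hg1
  obtain ⟨J0, J, hJ, hJ'⟩ := ihn _ hg2
  have hCm := CC_dvd m hm
  have hCn := CC_dvd n hn
  have hDm := DD_dvd m hm
  have hDn := DD_dvd n hn
  have cast_cop : ∀ a b : ℕ, a ∣ m → b ∣ n → IsCoprime (a : ℤ) (b : ℤ) := fun a b ha hb =>
    Nat.isCoprime_iff_coprime.2 (Nat.Coprime.of_dvd ha hb hmn)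
  rw [CC_mul m n hmn, DD_mul m n hmn]
  have c1 := cast_cop _ _ hCm hDn
  have c2 := cast_cop _ _ hDm hCn
  have c3 := cast_cop _ _ hDm hDn
  have z1 : (CC m : ℂ) ≠ 0 := by exact_mod_cast ne_zero_of_dvd_ne_zero hm hCm
  have z2 : (CC n : ℂ) ≠ 0 := by exact_mod_cast ne_zero_of_dvd_ne_zero hn hCn
  have z3 : (DD m : ℂ) ≠ 0 := by exact_mod_cast ne_zero_of_dvd_ne_zero hm hDm
  have z4 : (DD n : ℂ) ≠ 0 := by exact_mod_cast ne_zero_of_dvd_ne_zero hn hDn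
  refine ⟨K0 * CC n ^ 2 * DD n + J0 * CC m ^ 2 * DD m, K * CC n ^ 2 * DD n + J * CC m ^ 2 * DD m,
    fun x => ?_, fun hpr => ?_⟩
  · rw [hgg]
    have k1 := hK (CC n * x)
    have k2 := hJ (CC m * x)
    have s1 : (1 + ((CC m * CC n : ℕ) : ℤ) * x) = 1 + CC m * (CC n * x) := by push_cast; ring
    have s2 : (1 + ((CC m * CC n : ℕ) : ℤ) * x) = 1 + CC n * (CC m * x) := by push_cast; ring
    rw [← s1] at k1
    rw [← s2] at k2
    beta_reduce at k1 k2
    rw [k1, k2, ← ee_add]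
    congr 1
    push_cast
    field_simp
    ring
  · have p1 := hK' (comp_Pr m n hm hn g _ _ hg1 hg2 hgg hpr)
    have p2 := hJ' (comp_Pr n m hn hm g _ _ hg2 hg1 (fun x => by rw [hgg, mul_comm])
      (by rwa [mul_comm]))
    push_cast
    apply IsCoprime.mul_right
    · apply IsCoprime.add_mul_right_left
      exact (p1.mul_left (c2.symm.pow_left)).mul_left c3.symm
    · rw [add_comm]
      apply IsCoprime.add_mul_right_left
      exact (p2.mul_left (c1.pow_left)).mul_left c3

lemma all_case (q : ℕ) : q ≠ 0 → ∀ g, GG q g → PCon (CC q) (DD q) q g := by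
  induction q using Nat.recOnPosPrimePosCoprime with
  | prime_pow p n hp hn => intro _ g hg; exact pp_case p n hp hn g hg
  | zero => intro h; exact absurd rfl h
  | one =>
    intro _ g hg
    refine ⟨0, 0, fun x => ?_, fun _ => by simpa [DD] using isCoprime_one_right⟩
    have : ee 0 = 1 := by simpa using ee_int 0
    simp only [Int.cast_zero, zero_mul, mul_zero, zero_div, add_zero, this]
    rw [← hg.one]
    exact hg.per _ _ (by simp)
  | coprime a b ha hb hab iha ihb =>
    intro _ g hg
    exact mul_case a b (by omega) (by omega) hab (iha (by omega)) (ihb (by omega)) g hg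

lemma prim_Pr (q : ℕ) (hq : q ≠ 0) (χ : DirichletCharacter ℂ q) (hχ : χ.IsPrimitive) :
    Pr q (fun x => χ ((x : ℤ) : ZMod q)) := by
  have : NeZero q := ⟨hq⟩
  intro p hp hpq
  by_contra! hcon
  have hd : q / p ∣ q := Nat.div_dvd_of_dvd hpq
  have hlt : q / p < q := Nat.div_lt_self (Nat.pos_of_ne_zero hq) hp.one_lt
  have hf : χ.FactorsThrough (q / p) := by
    rw [DirichletCharacter.factorsThrough_iff_ker_unitsMap hd]
    intro u hu
    rw [MonoidHom.mem_ker] at hu ⊢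
    have h1 : ((((u : ZMod q).val : ℤ)) : ZMod (q / p)) = ((1 : ℤ) : ZMod (q / p)) := by
      have := congrArg Units.val hu
      rw [ZMod.unitsMap_val] at this
      simpa [ZMod.natCast_val] using this
    obtain ⟨x, hx⟩ := (ZMod.intCast_eq_intCast_iff_dvd_sub _ _ _).1 h1.symm
    have h2 := hcon x
    rw [← hx] at h2
    ext
    rw [MulChar.coe_toUnitHom]
    simpa using h2
  rw [DirichletCharacter.isPrimitive_def] at hχ
  have hle : χ.conductor ≤ q / p := Nat.sInf_le hf
  omega

/-- There are integers `L₀`, `L` with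
`χ(1 + C(q)x) = e^{4πi L₀ x/(C(q)D(q)) + 2πi L x²/D(q)}` for all integers `x`; moreover if `χ`
is primitive then `L₀, L` can be chosen with `gcd(L, D(q)) = 1`. -/
theorem postnikov_quadratic (q : ℕ) (hq : q ≠ 0) (χ : DirichletCharacter ℂ q) :
    ∃ L0 L : ℤ,
      (∀ x : ℤ, χ (((1 + (CC q : ℤ) * x : ℤ) : ZMod q)) =
        Complex.exp (4 * Real.pi * I * (L0 : ℂ) * (x : ℂ) / ((CC q : ℂ) * (DD q : ℂ)) +
          2 * Real.pi * I * (L : ℂ) * (x : ℂ) ^ 2 / (DD q : ℂ))) ∧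
      (χ.IsPrimitive → Int.gcd L (DD q) = 1) := by
  have hg : GG q (fun x => χ ((x : ℤ) : ZMod q)) := by
    refine ⟨fun x y h => ?_, fun x y => ?_, ?_⟩
    · have := (ZMod.intCast_eq_intCast_iff_dvd_sub _ _ _).2 h
      simp only [this]
    · simp
    · simp
  obtain ⟨L0, L, h1, h2⟩ := all_case q hq _ hg
  refine ⟨L0, L, fun x => ?_, fun hχ => Int.isCoprime_iff_gcd_eq_one.1 (h2 (prim_Pr q hq χ hχ))⟩
  refine (h1 x).trans ?_
  unfold ee
  congr 1
  ring
end

section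
/- Let M and N be positive integers. Then ∑_{m=1}^{M} (1 − m/M) · gcd(2m, N)/m ≤ τ(N) · log M, where τ(N) is the number of positive divisors of N. -/
lemma aux_sum (M e : ℕ) (hM : 0 < M) (he : 0 < e) :
    (e : ℝ) * ∑ m ∈ (Finset.Icc 1 M).filter (fun m => e ∣ m), (1 - (m : ℝ) / M) / m ≤
      Real.log M := by
  have hM' : (0 : ℝ) < M := by exact_mod_cast hM
  have he' : (0 : ℝ) < e := by exact_mod_cast he
  have himg : (Finset.Icc 1 M).filter (fun m => e ∣ m)
      = (Finset.Icc 1 (M / e)).image (fun k => e * k) := by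
    ext m
    simp only [Finset.mem_filter, Finset.mem_Icc, Finset.mem_image]
    constructor
    · rintro ⟨⟨h1, h2⟩, k, rfl⟩
      refine ⟨k, ⟨Nat.pos_of_mul_pos_left h1, ?_⟩, rfl⟩
      rw [Nat.le_div_iff_mul_le he, mul_comm]
      exact h2
    · rintro ⟨k, ⟨h1, h2⟩, rfl⟩
      rw [Nat.le_div_iff_mul_le he, mul_comm] at h2
      exact ⟨⟨Nat.mul_pos he h1, h2⟩, dvd_mul_right _ _⟩
  rw [himg, Finset.sum_image (fun a _ b _ h => Nat.eq_of_mul_eq_mul_left he h), Finset.mul_sum]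
  have hterm : ∀ k ∈ Finset.Icc 1 (M / e),
      (e : ℝ) * ((1 - ((e * k : ℕ) : ℝ) / M) / ((e * k : ℕ) : ℝ)) = (k : ℝ)⁻¹ - e / M := by
    intro k hk
    have hk' : (0 : ℝ) < k := by
      have := (Finset.mem_Icc.mp hk).1
      exact_mod_cast this
    push_cast
    field_simp
  rw [Finset.sum_congr rfl hterm, Finset.sum_sub_distrib]
  simp only [Finset.sum_const, Nat.card_Icc, Nat.add_sub_cancel, nsmul_eq_mul]
  have hH := harmonic_le_one_add_log (M / e)
  rw [harmonic_eq_sum_Icc] at hH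
  push_cast at hH
  rcases Nat.eq_zero_or_pos (M / e) with h0 | h0
  · rw [h0]
    simpa using Real.log_natCast_nonneg M
  · set K := M / e with hK
    have hK' : (0 : ℝ) < K := by exact_mod_cast h0
    have h1 := Real.log_le_sub_one_of_pos (x := (K : ℝ) * (e / M)) (by positivity)
    rw [Real.log_mul (by positivity) (by positivity),
      Real.log_div (by positivity) (by positivity)] at h1
    have h2 := Real.log_natCast_nonneg e
    linarith

lemma aux_tot (c : ℕ) (hc : 0 < c) : Nat.totient (2 * c) ≤ c := by
  induction c using Nat.strong_induction_on with
  | _ c ih =>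
    rcases Nat.even_or_odd' c with ⟨b, rfl | h⟩
    · have := ih b (by omega) (by omega)
      rw [Nat.totient_mul_of_prime_of_dvd Nat.prime_two (dvd_mul_right 2 b)]
      omega
    · rw [Nat.totient_mul (Nat.coprime_two_left.mpr ⟨b, h⟩)]
      simpa using Nat.totient_le c

lemma aux_e (d : ℕ) (hd : 0 < d) :
    ∃ e : ℕ, 0 < e ∧ Nat.totient d ≤ e ∧ ∀ m, d ∣ 2 * m ↔ e ∣ m := by
  rcases Nat.even_or_odd' d with ⟨c, rfl | rfl⟩
  · refine ⟨c, by omega, ?_, fun m => Nat.mul_dvd_mul_iff_left (by norm_num)⟩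
    exact aux_tot c (by omega)
  · refine ⟨2 * c + 1, hd, Nat.totient_le _, fun m => ?_⟩
    exact Nat.Coprime.dvd_mul_left (by simp)

/-- `∑_{m=1}^{M} (1 − m/M) · gcd(2m, N)/m ≤ τ(N) · log M`. -/
theorem gcd_weighted_sum_div_le (M N : ℕ) (hM : 0 < M) (hN : 0 < N) :
    ∑ m ∈ Finset.Icc 1 M, (1 - (m : ℝ) / M) * (Nat.gcd (2 * m) N : ℝ) / m ≤
      (N.divisors.card : ℝ) * Real.log M := by
  have hM' : (0 : ℝ) < M := by exact_mod_cast hM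
  have hg : ∀ m ∈ Finset.Icc 1 M, (1 - (m : ℝ) / M) * (Nat.gcd (2 * m) N : ℝ) / m
      = ∑ d ∈ N.divisors, if d ∣ 2 * m then (Nat.totient d : ℝ) * ((1 - (m : ℝ) / M) / m) else 0 := by
    intro m hm
    have h1 : ((Nat.gcd (2 * m) N : ℕ) : ℝ)
        = ∑ d ∈ N.divisors.filter (fun d => d ∣ 2 * m), (Nat.totient d : ℝ) := by
      have : N.divisors.filter (fun d => d ∣ 2 * m) = (Nat.gcd (2 * m) N).divisors := by
        ext d
        have : Nat.gcd (2 * m) N ≠ 0 := (Nat.gcd_pos_of_pos_right _ hN).ne'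
        simp only [Finset.mem_filter, Nat.mem_divisors, Nat.dvd_gcd_iff]
        have := hN.ne'
        tauto
      rw [this]
      exact_mod_cast (Nat.sum_totient _).symm
    rw [← Finset.sum_filter, ← Finset.sum_mul, ← h1]
    ring
  rw [Finset.sum_congr rfl hg, Finset.sum_comm, ← nsmul_eq_mul]
  refine Finset.sum_le_card_nsmul _ _ _ fun d hd => ?_
  obtain ⟨e, he, hle, hiff⟩ := aux_e d (Nat.pos_of_mem_divisors hd)
  simp only [hiff]
  rw [← Finset.sum_filter, ← Finset.mul_sum]
  refine le_trans (mul_le_mul_of_nonneg_right (Nat.cast_le.mpr hle) ?_) (aux_sum M e hM he)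
  refine Finset.sum_nonneg fun m hm => ?_
  have hmM : (m : ℝ) ≤ M := by
    exact_mod_cast (Finset.mem_Icc.mp (Finset.mem_filter.mp hm).1).2
  have : (m : ℝ) / M ≤ 1 := (div_le_one hM').mpr hmM
  exact div_nonneg (by linarith) (Nat.cast_nonneg m)
end

section
/- Let M and N be positive integers. Then ∑_{m=1}^{M} (1 − m/M) · gcd(2m, N) ≤ τ(N) · M, where τ(N) is the number of positive divisors of N. -/
theorem aux_mult_sum (M e : ℕ) (hM : 0 < M) (he : 0 < e) :
    2 * (e : ℝ) * ∑ m ∈ (Finset.Icc 1 M).filter (fun m => e ∣ m), (1 - (m : ℝ) / M) ≤ M := by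
  have himg : (Finset.Icc 1 M).filter (fun m => e ∣ m)
      = (Finset.Icc 1 (M / e)).image (fun k => e * k) := by
    ext m
    simp only [Finset.mem_filter, Finset.mem_Icc, Finset.mem_image]
    constructor
    · rintro ⟨⟨h1, h2⟩, k, rfl⟩
      refine ⟨k, ⟨Nat.pos_of_mul_pos_left h1, ?_⟩, rfl⟩
      rw [Nat.le_div_iff_mul_le he, mul_comm]
      exact h2
    · rintro ⟨k, ⟨h1, h2⟩, rfl⟩
      rw [Nat.le_div_iff_mul_le he, mul_comm] at h2
      exact ⟨⟨Nat.mul_pos he h1, h2⟩, dvd_mul_right _ _⟩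
  rw [himg, Finset.sum_image (fun a _ b _ h => Nat.eq_of_mul_eq_mul_left he h)]
  have hM' : (0 : ℝ) < M := by exact_mod_cast hM
  have hsum : ∀ K : ℕ, ∑ k ∈ Finset.Icc 1 K, (1 - ((e * k : ℕ) : ℝ) / M)
      = K - e * (K * (K + 1)) / (2 * M) := by
    intro K
    induction K with
    | zero => simp
    | succ n ih =>
      rw [Finset.sum_Icc_succ_top (by omega), ih]
      push_cast
      field_simp
      ring
  rw [hsum]
  generalize M / e = K
  have key : 2 * (e : ℝ) * (K - e * (K * (K + 1)) / (2 * M))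
      = M - ((M - e * K) ^ 2 + e ^ 2 * K) / M := by
    field_simp
    ring
  rw [key]
  have : (0 : ℝ) ≤ ((M - e * K) ^ 2 + e ^ 2 * K) / M := by positivity
  linarith

/-- `∑_{m=1}^{M} (1 − m/M) · gcd(2m, N) ≤ τ(N) · M`. -/
theorem gcd_weighted_sum_le (M N : ℕ) (hM : 0 < M) (hN : 0 < N) :
    ∑ m ∈ Finset.Icc 1 M, (1 - (m : ℝ) / M) * (Nat.gcd (2 * m) N : ℝ) ≤
      (N.divisors.card : ℝ) * M := by
  have hM' : (0 : ℝ) < M := by exact_mod_cast hM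
  have hw : ∀ m ∈ Finset.Icc 1 M, (0 : ℝ) ≤ 1 - (m : ℝ) / M := by
    intro m hm
    have : (m : ℝ) ≤ M := by exact_mod_cast (Finset.mem_Icc.1 hm).2
    rw [sub_nonneg, div_le_one hM']
    exact this
  calc ∑ m ∈ Finset.Icc 1 M, (1 - (m : ℝ) / M) * (Nat.gcd (2 * m) N : ℝ)
      ≤ ∑ m ∈ Finset.Icc 1 M, (1 - (m : ℝ) / M) *
          ∑ d ∈ N.divisors, (if d ∣ 2 * m then (d : ℝ) else 0) := by
        refine Finset.sum_le_sum fun m hm => mul_le_mul_of_nonneg_left ?_ (hw m hm)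
        have h := Finset.single_le_sum
          (f := fun d : ℕ => if d ∣ 2 * m then (d : ℝ) else 0) (s := N.divisors)
          (fun d _ => by split_ifs <;> positivity)
          (Nat.mem_divisors.2 ⟨Nat.gcd_dvd_right (2 * m) N, hN.ne'⟩)
        simpa only [Nat.gcd_dvd_left, if_true] using h
    _ = ∑ d ∈ N.divisors, ∑ m ∈ Finset.Icc 1 M,
          (1 - (m : ℝ) / M) * (if d ∣ 2 * m then (d : ℝ) else 0) := by
        simp_rw [Finset.mul_sum]
        exact Finset.sum_comm
    _ ≤ ∑ d ∈ N.divisors, (M : ℝ) := by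
        refine Finset.sum_le_sum fun d hd => ?_
        have hd0 : 0 < d := Nat.pos_of_mem_divisors hd
        obtain ⟨e, he, hde, hdv⟩ : ∃ e : ℕ, 0 < e ∧ d ≤ 2 * e ∧ ∀ m, d ∣ 2 * m → e ∣ m := by
          rcases Nat.even_or_odd' d with ⟨e, rfl | h⟩
          · exact ⟨e, by omega, le_rfl, fun m h => Nat.dvd_of_mul_dvd_mul_left two_pos h⟩
          · refine ⟨d, hd0, by omega, fun m hm => ?_⟩
            have : Nat.Coprime d 2 := by
              rw [Nat.coprime_two_right]
              exact ⟨e, h⟩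
            exact this.dvd_of_dvd_mul_left hm
        refine le_trans ?_ (aux_mult_sum M e hM he)
        rw [Finset.mul_sum, Finset.sum_filter]
        refine Finset.sum_le_sum fun m hm => ?_
        have hwm := hw m hm
        have hde' : (d : ℝ) ≤ 2 * e := by exact_mod_cast hde
        by_cases h : d ∣ 2 * m
        · rw [if_pos h, if_pos (hdv m h), mul_comm]
          exact mul_le_mul_of_nonneg_right hde' hwm
        · rw [if_neg h, mul_zero]
          split_ifs <;> positivity
    _ = (N.divisors.card : ℝ) * M := by simp
end

section
/- Let L and C be positive integers. Then ∑_{r=0}^{C−1} √⌊(L + r)/C⌋ ≤ √(C·L). -/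
theorem hermite_nat_aux (C : ℕ) (hC : 0 < C) (L : ℕ) :
    ∑ r ∈ Finset.range C, (L + r) / C = L := by
  induction L with
  | zero =>
    apply Finset.sum_eq_zero
    intro r hr
    rw [Finset.mem_range] at hr
    rw [Nat.zero_add]
    exact Nat.div_eq_of_lt hr
  | succ L ih =>
    have h1 := Finset.sum_range_succ (fun r => (L + r) / C) C
    have h2 := Finset.sum_range_succ' (fun r => (L + r) / C) C
    have h3 : (L + C) / C = L / C + 1 := Nat.add_div_right L hC
    have h4 : ∑ r ∈ Finset.range C, (L + 1 + r) / C
        = ∑ r ∈ Finset.range C, (L + (r + 1)) / C :=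
      Finset.sum_congr rfl fun r _ => by rw [show L + 1 + r = L + (r + 1) by ring]
    simp only [Nat.add_zero] at h1 h2
    omega

/-- Let `L` and `C` be positive integers. Then `∑_{r=0}^{C−1} √⌊(L+r)/C⌋ ≤ √(C·L)`. -/
theorem sum_sqrt_floor_le (L C : ℕ) (hL : 0 < L) (hC : 0 < C) :
    ∑ r ∈ Finset.range C, Real.sqrt (((L + r) / C : ℕ) : ℝ) ≤ Real.sqrt ((C : ℝ) * L) := by
  apply Real.le_sqrt_of_sq_le
  have h := sq_sum_le_card_mul_sum_sq (s := Finset.range C)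
    (f := fun r => Real.sqrt (((L + r) / C : ℕ) : ℝ))
  have h2 : ∑ r ∈ Finset.range C, Real.sqrt (((L + r) / C : ℕ) : ℝ) ^ 2 = (L : ℝ) := by
    rw [Finset.sum_congr rfl fun r _ => Real.sq_sqrt (Nat.cast_nonneg ((L + r) / C))]
    exact_mod_cast hermite_nat_aux C hC L
  rw [h2, Finset.card_range] at h
  exact h
end
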